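/- Mayordomo's theorem: For every A ∈ 2^ω, the effective Hausdorff dimension of A satisfies dim(A) = liminf_{n→∞} K(A↾n)/n = liminf_{n→∞} C(A↾n)/n. -/

import Mathlib

open scoped ENNReal NNReal Classical

namespace AR

/-- Elements of Cantor space `2^ω`: infinite binary sequences. -/
abbrev Seq := ℕ → Bool

/-- Finite binary strings `2^{<ω}`. -/
abbrev Str := List Bool

/-- The first `n` bits of a sequence `A`, as a finite string (`A↾n`). -/
def pre (A : Seq) (n : ℕ) : Str := List.ofFn fun i : Fin n => A i

/-- The basic clopen cylinder `[σ]` of all sequences extending `σ`. -/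
def cyl (σ : Str) : Set Seq := {A | pre A σ.length = σ}

/-- A measure on Cantor space is *fair-coin* if every cylinder `[σ]` has measure
`2^{-|σ|}`; this uniquely characterizes the usual product measure `μ` on `2^ω`. -/
def FairCoin (μ : MeasureTheory.Measure Seq) : Prop :=
  ∀ σ : Str, μ (cyl σ) = (2 : ℝ≥0∞)⁻¹ ^ σ.length

/-- A machine is a partial computable function `2^{<ω} ⇀ 2^{<ω}`. -/
def IsMachine (M : Str →. Str) : Prop := Partrec M

/-- Kolmogorov complexity of `τ` relative to the machine `M`:
`C_M(τ) = min{|σ| : M(σ)↓ = τ}`, with value `∞` if no such `σ` exists. -/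
noncomputable def Cplx (M : Str →. Str) (τ : Str) : ℕ∞ :=
  sInf ((fun σ : Str => (σ.length : ℕ∞)) '' {σ | τ ∈ M σ})

/-- A universal machine: a machine simulating every machine up to an additive
constant.  `Cplx U` for universal `U` is plain Kolmogorov complexity `C`. -/
def UniversalMachine (U : Str →. Str) : Prop :=
  IsMachine U ∧ ∀ M : Str →. Str, IsMachine M → ∃ c : ℕ, ∀ τ, Cplx U τ ≤ Cplx M τ + c

/-- A set of strings is prefix-free if none of its elements is a proper initial
segment of another. -/
def PrefixFree (S : Set Str) : Prop :=
  ∀ σ ∈ S, ∀ τ ∈ S, σ <+: τ → σ = τ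

/-- A prefix-free machine: a machine whose domain is prefix-free. -/
def PrefixFreeMachine (M : Str →. Str) : Prop :=
  IsMachine M ∧ PrefixFree {σ | (M σ).Dom}

/-- A universal prefix-free machine.  `Cplx U` for such `U` is prefix-free
Kolmogorov complexity `K`. -/
def UniversalPFMachine (U : Str →. Str) : Prop :=
  PrefixFreeMachine U ∧
    ∀ M : Str →. Str, PrefixFreeMachine M → ∃ c : ℕ, ∀ τ, Cplx U τ ≤ Cplx M τ + c

/-- A c.e. (recursively enumerable) predicate. -/
def CEPred {α} [Primcodable α] (p : α → Prop) : Prop :=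
  Partrec fun a => Part.assert (p a) fun _ => Part.some ()

/-- A Martin-Löf test: a sequence of uniformly Σ⁰₁ classes `U i`, given by a single
c.e. set `W` of pairs, with `μ (U i) ≤ 2^{-i}`. -/
def MLTest (μ : MeasureTheory.Measure Seq) (U : ℕ → Set Seq) : Prop :=
  ∃ W : Set (ℕ × Str), CEPred (· ∈ W) ∧
    (∀ i, U i = ⋃ σ ∈ {σ : Str | (i, σ) ∈ W}, cyl σ) ∧
    ∀ i, μ (U i) ≤ (2 : ℝ≥0∞)⁻¹ ^ i

/-- `A` is Martin-Löf random if it passes every Martin-Löf test. -/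
def MLRandom (μ : MeasureTheory.Measure Seq) (A : Seq) : Prop :=
  ∀ U : ℕ → Set Seq, MLTest μ U → A ∉ ⋂ i, U i

/-- A martingale: a nonnegative function on strings satisfying the fairness
condition `d(σ) = (d(σ0) + d(σ1))/2`. -/
def IsMartingale (d : Str → ℝ≥0) : Prop :=
  ∀ σ : Str, d σ = (d (σ ++ [false]) + d (σ ++ [true])) / 2

/-- An `s`-gale: `d(σ) = 2^{-s} (d(σ0) + d(σ1))`. -/
def IsGale (s : ℝ) (d : Str → ℝ≥0) : Prop :=
  ∀ σ : Str, (d σ : ℝ) = (2 : ℝ) ^ (-s) * ((d (σ ++ [false]) : ℝ) + (d (σ ++ [true]) : ℝ))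

/-- `d` succeeds on `A` if `limsup_n d(A↾n) = ∞`. -/
def Succeeds (d : Str → ℝ≥0) (A : Seq) : Prop :=
  Filter.limsup (fun n => (d (pre A n) : ℝ≥0∞)) Filter.atTop = ⊤

/-- The success set `S[d]` of `d`. -/
def successSet (d : Str → ℝ≥0) : Set Seq := {A | Succeeds d A}

/-- The values of `d` are uniformly left-c.e. reals: there is a computable
`g : 2^{<ω} × ℕ → ℚ`, nondecreasing in the second argument, with
`sup_n g(σ, n) = d(σ)` (i.e. `g(σ, ·) → d(σ)`) for every `σ`.  A martingale
(or `s`-gale) with this property is a c.e. martingale (or c.e. `s`-gale). -/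
def CEValues (d : Str → ℝ≥0) : Prop :=
  ∃ g : Str × ℕ → ℚ, Computable g ∧ (∀ σ, Monotone fun n => g (σ, n)) ∧
    ∀ σ, Filter.Tendsto (fun n => (g (σ, n) : ℝ)) Filter.atTop (nhds (d σ))

/-- The effective Hausdorff dimension of `A ∈ 2^ω`:
`dim(A) = inf{s ∈ ℚ, s ≥ 0 : some c.e. s-gale succeeds on A}` (Lutz).  (For every
rational `s > 1` some computable `s`-gale succeeds on every sequence, so this agrees
with taking the infimum over `s ∈ ℚ ∩ [0,1]` with the convention `inf ∅ = 1`.) -/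
noncomputable def effDim (A : Seq) : ℝ :=
  sInf {s : ℝ | ∃ q : ℚ, 0 ≤ q ∧ (q : ℝ) = s ∧
    ∃ d : Str → ℝ≥0, IsGale (q : ℝ) d ∧ CEValues d ∧ Succeeds d A}

/-! ### Computability of the enumeration of the rationals -/

section RatCoding

open Encodable

theorem primrec_pow : Primrec₂ ((· ^ ·) : ℕ → ℕ → ℕ) :=
  Primrec₂.unpaired'.1 Nat.Primrec.pow

theorem computable_count {α : Type*} [Primcodable α] {P : α → ℕ → Prop}
    [∀ a, DecidablePred (P a)] (hP : Computable₂ fun a n => decide (P a n)) :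
    Computable₂ fun a n => Nat.count (P a) n := by
  have h : Computable fun x : α × ℕ => (Nat.rec 0
      (fun m s => bif decide (P x.1 m) then s + 1 else s) x.2 : ℕ) := by
    have hcond : Computable fun y : (α × ℕ) × (ℕ × ℕ) =>
        bif decide (P y.1.1 y.2.1) then y.2.2 + 1 else y.2.2 :=
      Computable.cond (hP.comp (Computable.fst.comp Computable.fst)
        (Computable.fst.comp Computable.snd))
        (Computable.succ.comp (Computable.snd.comp Computable.snd))
        (Computable.snd.comp Computable.snd)
    exact Computable.nat_rec (f := Prod.snd) (g := fun _ => 0) Computable.snd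
      (Computable.const 0) hcond.to₂
  refine Computable.of_eq h fun x => ?_
  obtain ⟨a, n⟩ := x
  induction n with
  | zero => simp
  | succ n ih =>
    simp only at ih ⊢
    rw [Nat.count_succ, ih]
    by_cases hp : P a n <;> simp [hp]

/-- A code of a rational number built from its numerator and denominator. -/
def ratCode (q : ℚ) : ℕ := Nat.pair (encode q.num) q.den

theorem ratCode_injective : Function.Injective ratCode := by
  intro p q h
  have := Nat.pair_eq_pair.1 h
  exact Rat.ext (encode_injective this.1) this.2

theorem ratCode_ofNat (n : ℕ) :
    ratCode (Denumerable.ofNat ℚ n) = Nat.nth (· ∈ Set.range ratCode) n := by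
  have hinf : (Set.range ratCode).Infinite := Set.infinite_range_of_injective ratCode_injective
  have : Infinite (Set.range ratCode) := hinf.to_subtype
  rw [Nat.nth_apply_eq_orderIsoOfNat (p := (· ∈ Set.range ratCode)) hinf, Rat.instDenumerable,
    Denumerable.ofEncodableOfInfinite, Denumerable.ofEquiv_ofNat, Nat.Subtype.denumerable,
    Denumerable.ofEquiv_ofNat]
  have : Infinite (Set.range (@encode ℚ Rat.instEncodable)) := hinf.to_subtype
  let := @decidableRangeEncode ℚ _
  have key : ∀ x : Set.range (@encode ℚ Rat.instEncodable),
      ratCode ((equivRangeEncode ℚ).symm x) = x := by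
    intro x
    obtain ⟨q, rfl⟩ := (equivRangeEncode ℚ).surjective x
    rw [Equiv.symm_apply_apply]
    rfl
  refine (key _).trans ?_
  exact (congrArg Subtype.val
    (Nat.Subtype.orderIsoOfNat_apply (s := Set.range (@encode ℚ Rat.instEncodable)))).symm

/-- The code of a rational number used by its `Primcodable` instance. -/
def ratIndex (q : ℚ) : ℕ := @encode ℚ Primcodable.toEncodable q

theorem nth_ratIndex (q : ℚ) :
    Nat.nth (· ∈ Set.range ratCode) (ratIndex q) = ratCode q := by
  rw [← ratCode_ofNat]
  exact congrArg ratCode (Denumerable.ofNat_encode q)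

theorem ratIndex_eq (q : ℚ) : ratIndex q = Nat.count (· ∈ Set.range ratCode) (ratCode q) := by
  rw [← nth_ratIndex, Nat.count_nth_of_infinite]
  exact Set.infinite_range_of_injective ratCode_injective

theorem primrec_gcd : Primrec₂ Nat.gcd := by
  have hdvd : PrimrecRel fun (x : ℕ × ℕ) k => x.1 % k = 0 ∧ x.2 % k = 0 := by
    refine PrimrecPred.and ?_ ?_
    · exact Primrec.eq.comp (Primrec.nat_mod.comp (Primrec.fst.comp Primrec.fst) Primrec.snd)
        (Primrec.const 0)
    · exact Primrec.eq.comp (Primrec.nat_mod.comp (Primrec.snd.comp Primrec.fst) Primrec.snd)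
        (Primrec.const 0)
  have h := Primrec.nat_findGreatest (Primrec.nat_add.comp Primrec.fst Primrec.snd) hdvd
  refine Primrec.of_eq h fun x => ?_
  obtain ⟨a, b⟩ := x
  simp only [← Nat.dvd_iff_mod_eq_zero]
  rcases Nat.eq_zero_or_pos (a + b) with h0 | h0
  · have ha : a = 0 := by omega
    have hb : b = 0 := by omega
    simp [ha, hb]
  · apply le_antisymm
    · have := Nat.findGreatest_spec (P := fun k => k ∣ a ∧ k ∣ b) (n := a + b) (m := 1) h0
        (by simp)
      refine Nat.le_of_dvd (Nat.gcd_pos_iff.2 (by omega)) (Nat.dvd_gcd this.1 this.2)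
    · refine Nat.le_findGreatest ?_ ⟨Nat.gcd_dvd_left a b, Nat.gcd_dvd_right a b⟩
      rcases Nat.eq_zero_or_pos a with ha | ha
      · simp [ha]
      · exact (Nat.gcd_le_left b ha).trans (by omega)

theorem mem_range_ratCode (m : ℕ) :
    m ∈ Set.range ratCode ↔
      0 < m.unpair.2 ∧ Nat.gcd ((m.unpair.1 + 1) / 2) m.unpair.2 = 1 := by
  have hnat : ∀ z : ℤ, (encode z + 1) / 2 = z.natAbs := by
    intro z
    cases z with
    | ofNat n => change (2 * n + 1) / 2 = n; omega
    | negSucc n => change (2 * n + 1 + 1) / 2 = n + 1; omega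
  constructor
  · rintro ⟨q, rfl⟩
    simp only [ratCode, Nat.unpair_pair, hnat]
    exact ⟨q.den_pos, q.reduced⟩
  · rintro ⟨h1, h2⟩
    set z : ℤ := Denumerable.ofNat ℤ m.unpair.1 with hz
    have he : encode z = m.unpair.1 := by rw [hz, Denumerable.encode_ofNat]
    rw [← he, hnat] at h2
    exact ⟨⟨z, m.unpair.2, h1.ne', h2⟩, by simp [ratCode, he]⟩

theorem primrecPred_mem_range_ratCode : PrimrecPred (· ∈ Set.range ratCode) := by
  have h1 : Primrec fun m : ℕ => m.unpair.1 := Primrec.fst.comp Primrec.unpair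
  have h2 : Primrec fun m : ℕ => m.unpair.2 := Primrec.snd.comp Primrec.unpair
  refine PrimrecPred.of_eq (PrimrecPred.and (Primrec.nat_lt.comp (Primrec.const 0) h2)
    (Primrec.eq.comp (primrec_gcd.comp (Primrec.nat_div.comp (Primrec.succ.comp h1)
      (Primrec.const 2)) h2) (Primrec.const 1))) fun m => (mem_range_ratCode m).symm

theorem computable_count_ratCode : Computable (Nat.count (· ∈ Set.range ratCode)) :=
  (computable_count (α := Unit) (P := fun _ n => n ∈ Set.range ratCode)
    (primrecPred_mem_range_ratCode.decide.to_comp.comp Computable.snd)).comp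
    (Computable.const ()) Computable.id

theorem computable_ratCode : Computable ratCode := by
  have hP : Computable₂ fun (n m : ℕ) =>
      decide (m ∈ Set.range ratCode) && decide (Nat.count (· ∈ Set.range ratCode) m = n) := by
    refine Primrec.and.to_comp.comp ?_ ?_
    · exact primrecPred_mem_range_ratCode.decide.to_comp.comp Computable.snd
    · exact (Primrec.eq (α := ℕ)).decide.to_comp.comp
        (computable_count_ratCode.comp Computable.snd) Computable.fst
  have h := Partrec.rfind hP.partrec₂
  have hidx : Computable ratIndex := Computable.encode
  refine Partrec.of_eq_tot (h.comp hidx) fun q => ?_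
  rw [Nat.mem_rfind]
  constructor
  · simp [ratIndex_eq]
  · intro m hm
    simp only [PFun.coe_val, Part.mem_some_iff]
    symm
    rw [Bool.and_eq_false_iff]
    by_cases hmem : m ∈ Set.range ratCode
    · right
      rw [decide_eq_false_iff_not, ratIndex_eq]
      exact (Nat.count_strict_mono hmem hm).ne
    · left
      simpa using hmem

theorem computable_natDiv_rat : Computable fun x : ℕ × ℕ => (x.1 : ℚ) / x.2 := by
  rw [← Computable.encode_iff]
  change Computable fun x : ℕ × ℕ => ratIndex ((x.1 : ℚ) / x.2)
  simp only [ratIndex_eq]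
  refine computable_count_ratCode.comp ?_
  have hred : Primrec fun x : ℕ × ℕ => if x.2 = 0 then Nat.pair 0 1 else
      Nat.pair (2 * (x.1 / Nat.gcd x.1 x.2)) (x.2 / Nat.gcd x.1 x.2) := by
    have hg : Primrec fun x : ℕ × ℕ => Nat.gcd x.1 x.2 := primrec_gcd
    refine Primrec.ite (Primrec.eq.comp Primrec.snd (Primrec.const 0)) (Primrec.const _) ?_
    exact Primrec₂.natPair.comp
      (Primrec.nat_mul.comp (Primrec.const 2) (Primrec.nat_div.comp Primrec.fst hg))
      (Primrec.nat_div.comp Primrec.snd hg)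
  refine hred.to_comp.of_eq fun x => ?_
  obtain ⟨a, b⟩ := x
  simp only
  split_ifs with hb
  · subst hb
    simp [ratCode]; rfl
  · have hb' : (0 : ℤ) < b := by positivity
    have h := Rat.divInt_eq_div a b
    simp only [Int.cast_natCast] at h
    rw [ratCode, ← h, Rat.num_divInt, Rat.den_divInt]
    have hb'' : (b : ℤ) ≠ 0 := hb'.ne'
    rw [if_neg hb'', Int.sign_eq_one_of_pos hb', one_mul]
    have : ((a : ℤ) / ((b : ℤ).gcd a : ℤ)) = ((a / Nat.gcd a b : ℕ) : ℤ) := by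
      rw [Int.gcd_natCast_natCast, Nat.gcd_comm b a]; norm_cast
    rw [this, Int.gcd_natCast_natCast, Nat.gcd_comm b a]
    rfl

theorem computable_one_lt_rat : Computable fun q : ℚ => decide (1 < q) := by
  have h1 : Primrec fun m : ℕ => m.unpair.1 := Primrec.fst.comp Primrec.unpair
  have h2 : Primrec fun m : ℕ => m.unpair.2 := Primrec.snd.comp Primrec.unpair
  have h : PrimrecPred fun m : ℕ => m.unpair.1 % 2 = 0 ∧ m.unpair.2 < m.unpair.1 / 2 :=
    PrimrecPred.and (Primrec.eq.comp (Primrec.nat_mod.comp h1 (Primrec.const 2))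
      (Primrec.const 0)) (Primrec.nat_lt.comp h2 (Primrec.nat_div.comp h1 (Primrec.const 2)))
  refine (h.decide.to_comp.comp computable_ratCode).of_eq fun q => ?_
  rw [decide_eq_decide]
  have hq : 1 < q ↔ (q.den : ℤ) < q.num := by
    rw [Rat.lt_iff]; simp
  rw [hq, ratCode, Nat.unpair_pair]
  cases hz : q.num with
  | ofNat n => change (2 * n) % 2 = 0 ∧ q.den < (2 * n) / 2 ↔ (q.den : ℤ) < (n : ℤ); omega
  | negSucc n =>
    change (2 * n + 1) % 2 = 0 ∧ q.den < (2 * n + 1) / 2 ↔ (q.den : ℤ) < Int.negSucc n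
    omega

end RatCoding

/-! ### Prefix-free descriptions by position in an enumeration -/

section PrefixFreeCoding

open Encodable

theorem Cplx_le_of_mem {M : Str →. Str} {σ τ : Str} (h : τ ∈ M σ) :
    Cplx M τ ≤ (σ.length : ℕ∞) :=
  sInf_le ⟨σ, h, rfl⟩

/-- The number with binary expansion `w`, most significant bit first. -/
def binVal (w : Str) : ℕ := w.foldl (fun n b => 2 * n + b.toNat) 0

theorem primrec_binVal : Primrec binVal := by
  have h : Primrec fun y : Str × (ℕ × Bool) => 2 * y.2.1 + y.2.2.toNat :=
    Primrec.nat_add.comp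
      (Primrec.nat_mul.comp (Primrec.const 2) (Primrec.fst.comp Primrec.snd))
      ((Primrec.dom_bool Bool.toNat).comp (Primrec.snd.comp Primrec.snd))
  exact Primrec.list_foldl (f := fun w : Str => w) (g := fun _ => 0) Primrec.id
    (Primrec.const 0) h.to₂

theorem binVal_append (v w : Str) : binVal (v ++ w) = binVal v * 2 ^ w.length + binVal w := by
  induction w using List.reverseRecOn with
  | nil => simp [binVal]
  | append_singleton w b ih =>
    rw [← List.append_assoc]
    simp only [binVal, List.foldl_append, List.foldl_cons, List.foldl_nil,
      List.length_append, List.length_singleton] at ih ⊢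
    rw [ih]
    ring

theorem binVal_unary_append (k : ℕ) (w : Str) :
    binVal (List.replicate k false ++ true :: w) = 2 ^ w.length + binVal w := by
  have h0 : binVal (List.replicate k false) = 0 := by
    induction k with
    | zero => rfl
    | succ k ih => rw [List.replicate_succ', binVal_append, ih]; rfl
  have h1 : binVal [true] = 1 := rfl
  rw [binVal_append, h0, ← List.singleton_append, binVal_append, h1]
  ring

theorem exists_binVal_eq (ℓ : ℕ) : ∀ i < 2 ^ ℓ, ∃ w : Str, w.length = ℓ ∧ binVal w = i := by
  induction ℓ with
  | zero => intro i hi; exact ⟨[], rfl, by simp at hi; simp [binVal, hi]⟩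
  | succ ℓ ih =>
    intro i hi
    obtain ⟨w, hw, hv⟩ := ih (i / 2) (by rw [pow_succ] at hi; omega)
    refine ⟨w ++ [decide (i % 2 = 1)], by simp [hw], ?_⟩
    rw [binVal_append, hv]
    rcases Nat.mod_two_eq_zero_or_one i with h | h <;> simp [h, binVal] <;> omega

/-- The string entering at stage `m` the part of index `k` of the set enumerated by `R`, if any.
Strings are grouped by their length divided by `L`, and each string enters only once. -/
noncomputable def stage (R : Str → ℕ → Prop) (L k m : ℕ) : Option Str :=
  (decode₂ (Str × ℕ) m).bind fun x =>
    bif decide (x.1.length / L = k) && (decide (R x.1 x.2) &&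
      (decide (x.2 = 0) || !decide (R x.1 (x.2 - 1)))) then some x.1 else none

theorem computable_stage {R : Str → ℕ → Prop} (hR : Computable₂ fun σ t => decide (R σ t))
    (L : ℕ) : Computable₂ (stage R L) := by
  have hσ : Computable fun y : (ℕ × ℕ) × (Str × ℕ) => y.2.1 := Computable.fst.comp Computable.snd
  have ht : Computable fun y : (ℕ × ℕ) × (Str × ℕ) => y.2.2 := Computable.snd.comp Computable.snd
  have hk : Computable fun y : (ℕ × ℕ) × (Str × ℕ) => y.1.1 := Computable.fst.comp Computable.fst
  have heq := (Primrec.eq (α := ℕ)).decide.to_comp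
  have hlen : Computable fun y : (ℕ × ℕ) × (Str × ℕ) => decide (y.2.1.length / L = y.1.1) :=
    heq.comp (Primrec.nat_div.to_comp.comp (Computable.list_length.comp hσ)
      (Computable.const L)) hk
  have hnow : Computable fun y : (ℕ × ℕ) × (Str × ℕ) => decide (R y.2.1 y.2.2) := hR.comp hσ ht
  have hzero : Computable fun y : (ℕ × ℕ) × (Str × ℕ) => decide (y.2.2 = 0) :=
    heq.comp ht (Computable.const 0)
  have hprev : Computable fun y : (ℕ × ℕ) × (Str × ℕ) => !decide (R y.2.1 (y.2.2 - 1)) :=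
    Primrec.not.to_comp.comp (hR.comp hσ (Computable.pred.comp ht))
  have hbody : Computable fun y : (ℕ × ℕ) × (Str × ℕ) =>
      bif decide (y.2.1.length / L = y.1.1) && (decide (R y.2.1 y.2.2) &&
        (decide (y.2.2 = 0) || !decide (R y.2.1 (y.2.2 - 1)))) then some y.2.1 else none :=
    Computable.cond (Primrec.and.to_comp.comp hlen (Primrec.and.to_comp.comp hnow
      (Primrec.or.to_comp.comp hzero hprev))) (Computable.option_some.comp hσ)
      (Computable.const none)
  exact Computable.option_bind (f := fun x : ℕ × ℕ => decode₂ (Str × ℕ) x.2)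
    (Primrec.decode₂.to_comp.comp Computable.snd) hbody.to₂

theorem stage_eq_some {R : Str → ℕ → Prop} {L k m : ℕ} {σ : Str} :
    stage R L k m = some σ ↔ ∃ t, m = encode (σ, t) ∧ σ.length / L = k ∧ R σ t ∧
      (t = 0 ∨ ¬ R σ (t - 1)) := by
  simp only [stage, Option.bind_eq_some_iff]
  constructor
  · rintro ⟨⟨τ, t⟩, hx, h⟩
    rw [Encodable.decode₂_eq_some] at hx
    cases hb : (decide (τ.length / L = k) && (decide (R τ t) &&
      (decide (t = 0) || !decide (R τ (t - 1)))))
    · simp [hb] at h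
    · simp only [hb, cond_true, Option.some.injEq] at h
      subst h
      simp only [Bool.and_eq_true, Bool.or_eq_true, decide_eq_true_eq, Bool.not_eq_true',
        decide_eq_false_iff_not] at hb
      exact ⟨t, hx.symm, hb.1, hb.2.1, hb.2.2⟩
  · rintro ⟨t, rfl, h1, h2, h3⟩
    refine ⟨(σ, t), Encodable.encodek₂ _, ?_⟩
    have h3' : (decide (t = 0) || !decide (R σ (t - 1))) = true := by simpa using h3
    simp only [h1, h2, h3', decide_true, Bool.and_true, cond_true]

theorem stage_unique {R : Str → ℕ → Prop} (hmono : ∀ σ s t, s ≤ t → R σ s → R σ t)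
    {L k m m' : ℕ} {σ : Str} (h : stage R L k m = some σ) (h' : stage R L k m' = some σ) :
    m = m' := by
  obtain ⟨t, rfl, -, ht, hf⟩ := stage_eq_some.1 h
  obtain ⟨t', rfl, -, ht', hf'⟩ := stage_eq_some.1 h'
  have key : ∀ s s', R σ s → (s' = 0 ∨ ¬ R σ (s' - 1)) → s' ≤ s := by
    intro s s' hs hs'
    by_contra hlt
    rcases hs' with h0 | h0
    · omega
    · exact h0 (hmono σ s (s' - 1) (by omega) hs)
  rw [le_antisymm (key _ _ ht' hf) (key _ _ ht hf')]

theorem exists_stage {R : Str → ℕ → Prop} (L : ℕ) {σ : Str} (h : ∃ t, R σ t) :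
    ∃ m, stage R L (σ.length / L) m = some σ := by
  refine ⟨encode (σ, Nat.find h), stage_eq_some.2 ⟨_, rfl, rfl, Nat.find_spec h, ?_⟩⟩
  rcases Nat.eq_zero_or_pos (Nat.find h) with h0 | h0
  · exact Or.inl h0
  · exact Or.inr (Nat.find_min h (by omega))

theorem count_stage_lt {R : Str → ℕ → Prop} (hmono : ∀ σ s t, s ≤ t → R σ s → R σ t)
    {L k N m : ℕ} (hcard : ∀ F : Finset Str, (∀ σ ∈ F, σ.length / L = k ∧ ∃ t, R σ t) →
      F.card ≤ N) (hm : (stage R L k m).isSome) :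
    Nat.count (fun i => (stage R L k i).isSome = true) m < N := by
  refine lt_of_lt_of_le (Nat.lt_of_succ_le (Nat.count_strict_mono hm (Nat.lt_succ_self m))) ?_
  rw [Nat.count_eq_card_filter_range]
  set F := (Finset.range (m + 1)).filter fun i => (stage R L k i).isSome = true
  have hF : ∀ i ∈ F, stage R L k i = some ((stage R L k i).getD []) := by
    intro i hi
    obtain ⟨σ, hσ⟩ := Option.isSome_iff_exists.1 (Finset.mem_filter.1 hi).2
    simp [hσ]
  rw [← Finset.card_image_of_injOn (f := fun i => (stage R L k i).getD []) (s := F)]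
  · refine hcard _ fun σ hσ => ?_
    obtain ⟨i, hi, rfl⟩ := Finset.mem_image.1 hσ
    obtain ⟨t, -, h1, h2, -⟩ := stage_eq_some.1 (hF i hi)
    exact ⟨h1, t, h2⟩
  · intro i hi j hj hij
    have h1 := hF i hi
    simp only at hij
    rw [hij] at h1
    exact stage_unique hmono h1 (hF j hj)

/-- One search step of the machine which, on input `0^k 1 w` with `|w| = p * k + c`, looks for the
string whose position in the enumeration of the part of index `k` has binary expansion `w`. -/
noncomputable def searchStep (R : Str → ℕ → Prop) (L p c : ℕ) (x : Str) (m : ℕ) : Option Str :=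
  bif decide (x.length = x.idxOf true + 1 + (p * x.idxOf true + c)) &&
    decide (2 ^ (p * x.idxOf true + c) +
      Nat.count (fun i => (stage R L (x.idxOf true) i).isSome = true) m = binVal x)
  then stage R L (x.idxOf true) m else none

theorem computable_searchStep {R : Str → ℕ → Prop}
    (hR : Computable₂ fun σ t => decide (R σ t)) (L p c : ℕ) :
    Computable₂ (searchStep R L p c) := by
  have hx : Computable fun y : Str × ℕ => y.1 := Computable.fst
  have hm : Computable fun y : Str × ℕ => y.2 := Computable.snd
  have hk : Computable fun y : Str × ℕ => y.1.idxOf true :=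
    (Primrec.list_idxOf (α := Bool)).to_comp.comp (Computable.const true) hx
  have hstage := computable_stage hR L
  have hcount : Computable₂ fun k m =>
      Nat.count (fun i => (stage R L k i).isSome = true) m := by
    refine computable_count (P := fun k i => (stage R L k i).isSome = true) ?_
    refine (Primrec.option_isSome.to_comp.comp hstage).of_eq fun y => ?_
    simp
  have heq := (Primrec.eq (α := ℕ)).decide.to_comp
  have hadd := Primrec.nat_add.to_comp
  have hlen : Computable fun y : Str × ℕ => p * y.1.idxOf true + c :=
    hadd.comp (Primrec.nat_mul.to_comp.comp (Computable.const p) hk) (Computable.const c)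
  refine Computable.cond (Primrec.and.to_comp.comp ?_ ?_) (hstage.comp hk hm)
    (Computable.const none)
  · exact heq.comp (Computable.list_length.comp hx) (hadd.comp (Computable.succ.comp hk) hlen)
  · exact heq.comp (hadd.comp (primrec_pow.to_comp.comp (Computable.const 2) hlen)
      (hcount.comp hk hm)) (primrec_binVal.to_comp.comp hx)

theorem searchStep_eq_some {R : Str → ℕ → Prop} {L p c : ℕ} {x : Str} {m : ℕ} {σ : Str} :
    searchStep R L p c x m = some σ ↔
      x.length = x.idxOf true + 1 + (p * x.idxOf true + c) ∧
      2 ^ (p * x.idxOf true + c) +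
        Nat.count (fun i => (stage R L (x.idxOf true) i).isSome = true) m = binVal x ∧
      stage R L (x.idxOf true) m = some σ := by
  rw [searchStep, ← and_assoc]
  cases hb : (decide (x.length = x.idxOf true + 1 + (p * x.idxOf true + c)) &&
    decide (2 ^ (p * x.idxOf true + c) +
      Nat.count (fun i => (stage R L (x.idxOf true) i).isSome = true) m = binVal x))
  · rw [Bool.and_eq_false_iff, decide_eq_false_iff_not, decide_eq_false_iff_not] at hb
    simp only [cond_false, reduceCtorEq, false_iff]
    tauto
  · rw [Bool.and_eq_true, decide_eq_true_eq, decide_eq_true_eq] at hb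
    simp only [cond_true]
    tauto

theorem prefixFree_length_eq (f : ℕ → ℕ) :
    PrefixFree {x : Str | x.length = x.idxOf true + 1 + f (x.idxOf true)} := by
  rintro x hx y hy ⟨z, rfl⟩
  simp only [Set.mem_ofPred_eq] at hx hy
  have hmem : true ∈ x := by
    rw [← List.idxOf_lt_length_iff]; omega
  rw [List.idxOf_append_of_mem hmem, ← hx, List.length_append] at hy
  have : z = [] := List.length_eq_zero_iff.1 (by omega)
  simp [this]

theorem Cplx_le_of_enumerable {UK : Str →. Str} (hUK : UniversalPFMachine UK)
    {R : Str → ℕ → Prop} (hR : Computable₂ fun σ t => decide (R σ t))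
    (hmono : ∀ σ s t, s ≤ t → R σ s → R σ t) (L p c : ℕ)
    (hcard : ∀ k, ∀ F : Finset Str, (∀ σ ∈ F, σ.length / L = k ∧ ∃ t, R σ t) →
      F.card ≤ 2 ^ (p * k + c)) :
    ∃ c' : ℕ, ∀ σ, (∃ t, R σ t) →
      Cplx UK σ ≤ (((p + 1) * (σ.length / L) + c' : ℕ) : ℕ∞) := by
  set M : Str →. Str := fun x => Nat.rfindOpt (searchStep R L p c x)
  have hM : PrefixFreeMachine M := by
    refine ⟨Partrec.rfindOpt (computable_searchStep hR L p c), ?_⟩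
    intro x hx y hy hxy
    have hsub : ∀ z : Str, (M z).Dom →
        z.length = z.idxOf true + 1 + (p * z.idxOf true + c) := by
      intro z hz
      obtain ⟨m, σ, h⟩ := Nat.rfindOpt_dom.1 hz
      exact (searchStep_eq_some.1 h).1
    exact prefixFree_length_eq (fun k => p * k + c) x (hsub x hx) y (hsub y hy) hxy
  obtain ⟨e, he⟩ := hUK.2 M hM
  refine ⟨c + 1 + e, fun σ hσ => (he σ).trans ?_⟩
  set k := σ.length / L
  obtain ⟨m, hm⟩ := exists_stage L hσ
  obtain ⟨w, hw, hv⟩ := exists_binVal_eq (p * k + c) _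
    (count_stage_lt hmono (hcard k) (by rw [hm]; rfl : (stage R L k m).isSome))
  set x := List.replicate k false ++ true :: w with hx
  have hidx : x.idxOf true = k := by
    rw [hx, List.idxOf_append_of_notMem (by simp)]
    simp
  have hlen : x.length = k + 1 + (p * k + c) := by simp [hx, hw]; omega
  have hstep : searchStep R L p c x m = some σ := by
    rw [searchStep_eq_some, hidx]
    exact ⟨hlen, by rw [hx, binVal_unary_append, hw, hv], hm⟩
  have hmem : σ ∈ M x := by
    have hdom : (M x).Dom := Nat.rfindOpt_dom.2 ⟨m, σ, hstep⟩
    obtain ⟨m', hm'⟩ := Nat.rfindOpt_spec (Part.get_mem hdom)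
    obtain ⟨-, h1, h1'⟩ := searchStep_eq_some.1 hstep
    obtain ⟨-, h2, h2'⟩ := searchStep_eq_some.1 hm'
    have hmm : m = m' :=
      Nat.count_injective (p := fun i => (stage R L (x.idxOf true) i).isSome = true)
        (by simp [h1']) (by simp [h2']) (by omega)
    subst hmm
    rw [h1'] at h2'
    rw [Option.some.inj h2']
    exact Part.get_mem hdom
  refine (add_le_add_left (Cplx_le_of_mem hmem) _).trans ?_
  rw [hlen]
  norm_cast
  ring_nf
  exact le_rfl

end PrefixFreeCoding

/-! ### Strings of a fixed length and gales -/

section Gales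

/-- The strings of length `n`. -/
noncomputable def strs : ℕ → Finset Str
  | 0 => {[]}
  | n + 1 => (strs n ×ˢ (Finset.univ : Finset Bool)).image fun x => x.1 ++ [x.2]

theorem mem_strs {n : ℕ} {σ : Str} : σ ∈ strs n ↔ σ.length = n := by
  induction n generalizing σ with
  | zero => simp [strs]
  | succ n ih =>
    simp only [strs, Finset.mem_image, Finset.mem_product, Finset.mem_univ, and_true, Prod.exists,
      ih]
    constructor
    · rintro ⟨τ, b, h, rfl⟩
      simp [h]
    · intro h
      have hne : σ ≠ [] := by rintro rfl; simp at h
      exact ⟨σ.dropLast, σ.getLast hne, by simp [h], List.dropLast_append_getLast hne⟩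

theorem sum_strs_succ (f : Str → ℝ) (n : ℕ) :
    ∑ σ ∈ strs (n + 1), f σ = ∑ σ ∈ strs n, (f (σ ++ [false]) + f (σ ++ [true])) := by
  rw [strs, Finset.sum_image, Finset.sum_product]
  · simp [add_comm]
  · rintro ⟨σ, b⟩ - ⟨τ, c⟩ - h
    obtain ⟨h1, h2⟩ := List.append_inj' h rfl
    simp_all

theorem card_strs (n : ℕ) : (strs n).card = 2 ^ n := by
  have h : (∑ _σ ∈ strs n, (1 : ℝ)) = 2 ^ n := by
    induction n with
    | zero => simp [strs]
    | succ n ih => rw [sum_strs_succ, Finset.sum_add_distrib, ih]; ring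
  rw [Finset.sum_const, nsmul_eq_mul, mul_one] at h
  exact_mod_cast h

theorem IsGale.sum_strs {s : ℝ} {d : Str → ℝ≥0} (hd : IsGale s d) (n : ℕ) :
    ∑ σ ∈ strs n, (d σ : ℝ) = 2 ^ (s * n) * d [] := by
  induction n with
  | zero => simp [strs]
  | succ n ih =>
    have hstep : ∀ σ : Str, (d (σ ++ [false]) : ℝ) + d (σ ++ [true]) = 2 ^ s * d σ := by
      intro σ
      rw [hd σ, ← mul_assoc, ← Real.rpow_add two_pos, add_neg_cancel, Real.rpow_zero, one_mul]
    rw [sum_strs_succ (fun σ => (d σ : ℝ)), Finset.sum_congr rfl fun σ _ => hstep σ,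
      ← Finset.mul_sum, ih, ← mul_assoc, ← Real.rpow_add two_pos]
    congr 2
    push_cast
    ring

theorem IsGale.card_le {s : ℝ} {d : Str → ℝ≥0} (hd : IsGale s d) {n : ℕ} {F : Finset Str}
    (hF : ∀ σ ∈ F, σ.length = n ∧ 1 < d σ) : (F.card : ℝ) ≤ 2 ^ (s * n) * d [] := by
  calc (F.card : ℝ) = ∑ _σ ∈ F, (1 : ℝ) := by simp
    _ ≤ ∑ σ ∈ F, (d σ : ℝ) := Finset.sum_le_sum fun σ hσ => by exact_mod_cast (hF σ hσ).2.le
    _ ≤ ∑ σ ∈ strs n, (d σ : ℝ) :=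
      Finset.sum_le_sum_of_subset_of_nonneg (fun σ hσ => mem_strs.2 (hF σ hσ).1)
        fun σ _ _ => NNReal.coe_nonneg _
    _ = _ := hd.sum_strs n

theorem IsGale.card_block_le {s : ℝ} (hs : 0 ≤ s) {d : Str → ℝ≥0} (hd : IsGale s d)
    {L p : ℕ} (hL : 0 < L) (hp : (p : ℝ) = s * L) :
    ∃ c : ℕ, ∀ k, ∀ F : Finset Str, (∀ σ ∈ F, σ.length / L = k ∧ 1 < d σ) →
      F.card ≤ 2 ^ (p * k + c) := by
  obtain ⟨c, hc⟩ := pow_unbounded_of_one_lt ((L : ℝ) * (2 ^ p * d [])) (one_lt_two)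
  refine ⟨c, fun k F hF => ?_⟩
  have hsum : F.card = ∑ r ∈ Finset.range L, (F.filter fun σ => σ.length % L = r).card :=
    Finset.card_eq_sum_card_fiberwise fun σ _ => by
      simpa using Nat.mod_lt σ.length hL
  have hr : ∀ r ∈ Finset.range L,
      ((F.filter fun σ => σ.length % L = r).card : ℝ) ≤ 2 ^ (p * k) * (2 ^ p * d []) := by
    intro r hr
    refine (hd.card_le (n := L * k + r) fun σ hσ => ?_).trans ?_
    · obtain ⟨h1, h2⟩ := Finset.mem_filter.1 hσ
      refine ⟨?_, (hF σ h1).2⟩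
      rw [← (hF σ h1).1, ← h2, Nat.div_add_mod]
    · rw [← mul_assoc]
      refine mul_le_mul_of_nonneg_right ?_ (NNReal.coe_nonneg _)
      rw [← pow_add, ← Real.rpow_natCast]
      refine Real.rpow_le_rpow_of_exponent_le one_le_two ?_
      have : (r : ℝ) ≤ L := by exact_mod_cast (Finset.mem_range.1 hr).le
      push_cast
      rw [hp]
      nlinarith
  have : (F.card : ℝ) ≤ 2 ^ (p * k + c) := by
    calc (F.card : ℝ) = ∑ r ∈ Finset.range L, ((F.filter fun σ => σ.length % L = r).card : ℝ) := by
          rw [hsum]; push_cast; rfl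
      _ ≤ ∑ _r ∈ Finset.range L, (2 ^ (p * k) * (2 ^ p * d []) : ℝ) := Finset.sum_le_sum hr
      _ = 2 ^ (p * k) * (L * (2 ^ p * d [])) := by simp; ring
      _ ≤ 2 ^ (p * k) * 2 ^ c := by gcongr
      _ = _ := by rw [pow_add]
  exact_mod_cast this

theorem Cplx_le_of_gale {UK : Str →. Str} (hUK : UniversalPFMachine UK) {s : ℝ} (hs : 0 ≤ s)
    {d : Str → ℝ≥0} (hd : IsGale s d) (hce : CEValues d) {L p : ℕ} (hL : 0 < L)
    (hp : (p : ℝ) = s * L) :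
    ∃ c : ℕ, ∀ σ, 1 < d σ → Cplx UK σ ≤ (((p + 1) * (σ.length / L) + c : ℕ) : ℕ∞) := by
  obtain ⟨g, hg, hmono, hlim⟩ := hce
  obtain ⟨c, hc⟩ := hd.card_block_le hs hL hp
  have hle : ∀ σ t, 1 < g (σ, t) → 1 < d σ := by
    intro σ t ht
    have hm : Monotone fun n => (g (σ, n) : ℝ) := fun i j hij =>
      Rat.cast_mono (hmono σ hij)
    have h1 := hm.ge_of_tendsto (hlim σ) t
    have h2 : (1 : ℝ) < g (σ, t) := by exact_mod_cast ht
    exact_mod_cast h2.trans_le h1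
  obtain ⟨c', hc'⟩ := Cplx_le_of_enumerable hUK (R := fun σ t => 1 < g (σ, t))
    ((computable_one_lt_rat.comp hg).of_eq fun x => by rw [decide_eq_decide])
    (fun σ s t hst h => h.trans_le (hmono σ hst)) L p c
    (fun k F hF => hc k F fun σ hσ => ⟨(hF σ hσ).1, (hF σ hσ).2.elim fun t ht => hle σ t ht⟩)
  refine ⟨c', fun σ hσ => hc' σ ?_⟩
  have h1 : (1 : ℝ) < d σ := by exact_mod_cast hσ
  obtain ⟨t, ht⟩ := ((hlim σ).eventually_const_lt h1).exists
  exact ⟨t, by exact_mod_cast ht⟩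

theorem length_pre (A : Seq) (n : ℕ) : (pre A n).length = n := by simp [pre]

theorem frequently_Cplx_div_le {UK : Str →. Str} (hUK : UniversalPFMachine UK) {q : ℚ}
    (hq : 0 ≤ q) {d : Str → ℝ≥0} (hd : IsGale q d) (hce : CEValues d) {A : Seq}
    (hA : Succeeds d A) {ε : ℝ} (hε : 0 < ε) :
    ∃ᶠ n : ℕ in Filter.atTop, ((Cplx UK (pre A n)).toNat : ℝ) / n ≤ q + ε := by
  obtain ⟨t, ht⟩ := exists_nat_gt (2 / ε)
  have ht0 : (0 : ℝ) < t := lt_trans (by positivity) ht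
  have hden : (1 : ℝ) ≤ q.den := by exact_mod_cast q.den_pos
  have hL : 0 < q.den * t := Nat.mul_pos q.den_pos (by exact_mod_cast ht0)
  have hp : ((q.num.toNat * t : ℕ) : ℝ) = (q : ℝ) * (q.den * t : ℕ) := by
    have h1 : ((q.num.toNat : ℕ) : ℝ) = (q.num : ℝ) := by
      have := Int.toNat_of_nonneg (Rat.num_nonneg.2 hq)
      exact_mod_cast congrArg (fun z : ℤ => (z : ℝ)) this
    have h2 : (q : ℝ) = q.num / q.den := Rat.cast_def q
    push_cast
    rw [h1, h2]
    field_simp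
  set L := q.den * t
  set p := q.num.toNat * t
  have hLε : 2 < ε * L := by
    have h1 : 2 < ε * t := by rw [div_lt_iff₀ hε] at ht; linarith
    have h2 : ε * t ≤ ε * L := by
      refine mul_le_mul_of_nonneg_left ?_ hε.le
      simp only [L]; push_cast; nlinarith
    linarith
  obtain ⟨c, hc⟩ := Cplx_le_of_gale hUK (by exact_mod_cast hq) hd hce hL hp
  have hfreq : ∃ᶠ n : ℕ in Filter.atTop, (1 : ℝ≥0∞) < d (pre A n) := by
    refine Filter.frequently_lt_of_lt_limsup (by isBoundedDefault) ?_
    rw [hA]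
    exact ENNReal.one_lt_top
  have hlarge : ∀ᶠ n : ℕ in Filter.atTop, 2 * c / ε < (n : ℝ) :=
    (tendsto_natCast_atTop_atTop).eventually_gt_atTop _
  refine (hfreq.and_eventually hlarge).mono fun n ⟨h1, h2⟩ => ?_
  have hn : (0 : ℝ) < n := lt_of_le_of_lt (by positivity) h2
  have hK := hc (pre A n) (by exact_mod_cast h1)
  rw [length_pre] at hK
  have hK' : ((Cplx UK (pre A n)).toNat : ℝ) ≤ (p + 1) * (n / L : ℕ) + c := by
    exact_mod_cast ENat.toNat_le_of_le_natCast hK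
  have hdiv : ((n / L : ℕ) : ℝ) ≤ n / L := Nat.cast_div_le
  have hL0 : (0 : ℝ) < L := by exact_mod_cast hL
  rw [div_lt_iff₀ hε] at h2
  rw [div_le_iff₀ hn]
  have h3 : ((p : ℝ) + 1) * (n / L : ℕ) ≤ q * n + n / L := by
    calc ((p : ℝ) + 1) * (n / L : ℕ) ≤ (p + 1) * (n / L) := by gcongr
      _ = q * n + n / L := by rw [hp]; field_simp
  have h4 : (n : ℝ) / L ≤ ε / 2 * n := by
    rw [div_le_iff₀ hL0]; nlinarith
  nlinarith

theorem Cplx_le_two_mul_length {UK : Str →. Str} (hUK : UniversalPFMachine UK) :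
    ∃ c : ℕ, ∀ σ, Cplx UK σ ≤ ((2 * σ.length + c : ℕ) : ℕ∞) := by
  obtain ⟨c, hc⟩ := Cplx_le_of_enumerable hUK (R := fun _ _ => True)
    ((Computable.const true).of_eq fun _ => by simp) (fun _ _ _ _ _ => trivial) 1 1 0
    (fun k F hF => by
      rw [one_mul, add_zero, ← card_strs]
      exact Finset.card_le_card fun σ hσ => mem_strs.2 (by simpa using (hF σ hσ).1))
  exact ⟨c, fun σ => by simpa using hc σ ⟨0, trivial⟩⟩

end Gales

/-! ### A gale from a machine -/

section MachineGale

open Encodable Filter Topology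

theorem computable_sum_inv {α : Type*} [Primcodable α] {f : α → ℕ → ℕ} (hf : Computable₂ f) :
    ∃ F : α → ℕ → ℕ × ℕ, Computable₂ F ∧ ∀ a n, 0 < (F a n).2 ∧
      ((F a n).1 : ℚ) / (F a n).2 = ∑ j ∈ Finset.range n, ((f a j : ℚ))⁻¹ := by
  set step : ℕ → ℕ × ℕ → ℕ × ℕ := fun w s =>
    bif decide (w = 0) then s else (s.1 * w + s.2, s.2 * w) with hstep
  refine ⟨fun a n => Nat.rec (0, 1) (fun j s => step (f a j) s) n, ?_, fun a n => ?_⟩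
  · have hw : Computable fun y : (α × ℕ) × (ℕ × (ℕ × ℕ)) => f y.1.1 y.2.1 :=
      hf.comp (Computable.fst.comp Computable.fst) (Computable.fst.comp Computable.snd)
    have hs : Computable fun y : (α × ℕ) × (ℕ × (ℕ × ℕ)) => y.2.2 :=
      Computable.snd.comp Computable.snd
    have hs1 := Computable.fst.comp hs
    have hs2 := Computable.snd.comp hs
    have hmul := Primrec.nat_mul.to_comp
    have hbody : Computable fun y : (α × ℕ) × (ℕ × (ℕ × ℕ)) => step (f y.1.1 y.2.1) y.2.2 :=
      Computable.cond ((Primrec.eq (α := ℕ)).decide.to_comp.comp hw (Computable.const 0)) hs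
        (Computable.pair (Primrec.nat_add.to_comp.comp (hmul.comp hs1 hw) hs2) (hmul.comp hs2 hw))
    exact Computable.nat_rec (f := fun x : α × ℕ => x.2) (g := fun _ => (0, 1)) Computable.snd
      (Computable.const (0, 1)) hbody.to₂
  · induction n with
    | zero => simp
    | succ n ih =>
      simp only at ih ⊢
      set s : ℕ × ℕ := Nat.rec (0, 1) (fun j s => step (f a j) s) n
      obtain ⟨h0, h⟩ := ih
      rw [Finset.sum_range_succ, ← h]
      rcases Nat.eq_zero_or_pos (f a n) with hz | hz
      · simp [hstep, hz, h0]
      · have h1 : (0 : ℚ) < s.2 := by exact_mod_cast h0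
        have h2 : (0 : ℚ) < f a n := by exact_mod_cast hz
        simp only [hstep, hz.ne', decide_false, cond_false]
        refine ⟨Nat.mul_pos h0 hz, ?_⟩
        push_cast
        field_simp

/-- Step-bounded evaluation of a machine. -/
theorem IsMachine.exists_approx {M : Str →. Str} (hM : IsMachine M) :
    ∃ f : ℕ → Str → Option Str, Computable₂ f ∧
      (∀ p τ s t, s ≤ t → f s p = some τ → f t p = some τ) ∧
      ∀ p τ, τ ∈ M p ↔ ∃ t, f t p = some τ := by
  obtain ⟨c, hc⟩ := Nat.Partrec.Code.exists_code.1 hM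
  have hval : ∀ p x, x ∈ c.eval (encode p) ↔ ∃ τ, τ ∈ M p ∧ encode τ = x := by
    intro p x
    rw [hc]
    simp
  refine ⟨fun t p => (c.evaln t (encode p)).bind (decode (α := Str)), ?_, ?_, ?_⟩
  · have h1 : Computable fun x : ℕ × Str => c.evaln x.1 (encode x.2) :=
      (Nat.Partrec.Code.primrec_evaln.to_comp).comp
        (Computable.pair (Computable.pair Computable.fst (Computable.const c))
          (Computable.encode.comp Computable.snd))
    exact Computable.option_bind h1 (Computable.decode.comp Computable.snd).to₂
  · intro p τ s t hst h
    obtain ⟨x, hx, hd⟩ := Option.bind_eq_some_iff.1 h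
    exact Option.bind_eq_some_iff.2 ⟨x, Nat.Partrec.Code.evaln_mono hst hx, hd⟩
  · intro p τ
    constructor
    · intro h
      obtain ⟨t, ht⟩ := Nat.Partrec.Code.evaln_complete.1 ((hval p _).2 ⟨τ, h, rfl⟩)
      exact ⟨t, Option.bind_eq_some_iff.2 ⟨_, ht, encodek τ⟩⟩
    · rintro ⟨t, ht⟩
      obtain ⟨x, hx, hd⟩ := Option.bind_eq_some_iff.1 ht
      obtain ⟨τ', h1, rfl⟩ := (hval p x).1 (Nat.Partrec.Code.evaln_sound hx)
      rw [encodek] at hd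
      rwa [← Option.some.inj hd]

/-- `σ` is an initial segment of `τ` followed by infinitely many zeros. -/
def PrefixOfPadded (σ τ : Str) : Prop := ∀ i < σ.length, σ.getD i false = τ.getD i false

theorem primrecRel_prefixOfPadded : PrimrecRel PrefixOfPadded := by
  have h : PrimrecRel fun (i : ℕ) (y : Str × Str) => y.1.getD i false = y.2.getD i false :=
    Primrec.eq.comp
      ((Primrec.list_getD false).comp (Primrec.fst.comp Primrec.snd) Primrec.fst)
      ((Primrec.list_getD false).comp (Primrec.snd.comp Primrec.snd) Primrec.fst)
  have hall : PrimrecRel fun (L : List ℕ) (y : Str × Str) =>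
      ∀ i ∈ L, y.1.getD i false = y.2.getD i false := h.forall_mem_list
  refine (hall.comp (Primrec.list_range.comp (Primrec.list_length.comp Primrec.fst))
    Primrec.id).of_eq fun p => ?_
  simp [PrefixOfPadded]

theorem PrefixOfPadded.refl (σ : Str) : PrefixOfPadded σ σ := fun _ _ => rfl

theorem prefixOfPadded_append (σ τ : Str) (b : Bool) :
    PrefixOfPadded (σ ++ [b]) τ ↔ PrefixOfPadded σ τ ∧ τ.getD σ.length false = b := by
  constructor
  · intro h
    refine ⟨fun i hi => ?_, ?_⟩
    · rw [← h i (by simp; omega), List.getD_append _ _ _ _ hi]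
    · rw [← h σ.length (by simp)]
      simp
  · rintro ⟨h1, h2⟩ i hi
    rcases Nat.lt_or_ge i σ.length with h | h
    · rw [List.getD_append _ _ _ _ h, h1 i h]
    · have : i = σ.length := by simp at hi; omega
      subst this
      rw [h2]
      simp

/-- The reciprocal of the mass given to a program. -/
def progDen (p : Str) : ℕ := 2 ^ p.length * (p.length + 1) ^ 2

theorem progDen_pos (p : Str) : 0 < progDen p := by unfold progDen; positivity

theorem primrec_progDen : Primrec progDen :=
  Primrec.nat_mul.comp (primrec_pow.comp (Primrec.const 2) Primrec.list_length)
    (primrec_pow.comp (Primrec.succ.comp Primrec.list_length) (Primrec.const 2))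

theorem summable_progDen_inv : Summable fun p : Str => ((progDen p : ℝ))⁻¹ := by
  have hs : Summable fun n : ℕ => (1 : ℝ) / ((n : ℝ) + 1) ^ 2 := by
    have h := (summable_nat_add_iff 1).2 (Real.summable_one_div_nat_pow.2 one_lt_two)
    simpa using h
  refine summable_of_sum_le (c := ∑' n : ℕ, (1 : ℝ) / ((n : ℝ) + 1) ^ 2)
    (fun p => by positivity) fun u => ?_
  obtain ⟨N, hN⟩ : ∃ N, ∀ p ∈ u, p.length < N :=
    ⟨u.sup List.length + 1, fun p hp => Nat.lt_succ_of_le (Finset.le_sup (f := List.length) hp)⟩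
  rw [← Finset.sum_fiberwise_of_maps_to (g := List.length) (t := Finset.range N)
    fun p hp => Finset.mem_range.2 (hN p hp)]
  refine le_trans (Finset.sum_le_sum fun n _ => ?_)
    (hs.sum_le_tsum (Finset.range N) fun n _ => by positivity)
  calc ∑ p ∈ u with p.length = n, ((progDen p : ℝ))⁻¹
      ≤ ∑ p ∈ strs n, ((progDen p : ℝ))⁻¹ :=
        Finset.sum_le_sum_of_subset_of_nonneg
          (fun p hp => mem_strs.2 (Finset.mem_filter.1 hp).2) fun p _ _ => by positivity
    _ = ∑ _p ∈ strs n, ((2 : ℝ) ^ n * (n + 1) ^ 2)⁻¹ := by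
        refine Finset.sum_congr rfl fun p hp => ?_
        simp [progDen, mem_strs.1 hp]
    _ = 1 / ((n : ℝ) + 1) ^ 2 := by
        rw [Finset.sum_const, card_strs, nsmul_eq_mul]
        push_cast
        field_simp

/-- The reciprocal of the mass which the `j`-th program contributes to the cylinder of `σ`, or `0`
if there is no contribution. -/
noncomputable def massDen (M : Str →. Str) (σ : Str) (j : ℕ) : ℕ :=
  if ∃ p τ, encode p = j ∧ τ ∈ M p ∧ PrefixOfPadded σ τ
  then ((decode₂ Str j).map progDen).getD 0 else 0

theorem massDen_encode {M : Str →. Str} {σ p τ : Str} (hτ : τ ∈ M p) :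
    massDen M σ (encode p) = if PrefixOfPadded σ τ then progDen p else 0 := by
  rw [massDen, encodek₂]
  refine if_congr ⟨?_, fun h => ⟨p, τ, rfl, hτ, h⟩⟩ rfl rfl
  rintro ⟨p', τ', hp, hτ', h⟩
  rw [encode_injective hp] at hτ'
  rwa [Part.mem_unique hτ hτ']

theorem massDen_eq_zero {M : Str →. Str} {j : ℕ} (h : ¬ ∃ p τ, encode p = j ∧ τ ∈ M p)
    (σ : Str) : massDen M σ j = 0 :=
  if_neg fun ⟨p, τ, hp, hτ, _⟩ => h ⟨p, τ, hp, hτ⟩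

theorem massDen_inv_le (M : Str →. Str) (σ : Str) (j : ℕ) :
    ((massDen M σ j : ℝ))⁻¹ ≤ ((((decode₂ Str j).map progDen).getD 0 : ℕ) : ℝ)⁻¹ := by
  rw [massDen]
  split_ifs
  · exact le_rfl
  · simp

theorem summable_index_progDen_inv :
    Summable fun j : ℕ => ((((decode₂ Str j).map progDen).getD 0 : ℕ) : ℝ)⁻¹ := by
  rw [← (encode_injective (α := Str)).summable_iff]
  · refine summable_progDen_inv.congr fun p => ?_
    simp only [Function.comp_apply, encodek₂]
    rfl
  · intro j hj
    have : decode₂ Str j = none := by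
      rw [Option.eq_none_iff_forall_ne_some]
      intro p hp
      exact hj ⟨p, decode₂_eq_some.1 hp⟩
    simp [this]

/-- The mass of the cylinder of `σ` under the measure induced by the machine `M`. -/
noncomputable def mass (M : Str →. Str) (σ : Str) : ℝ := ∑' j, ((massDen M σ j : ℝ))⁻¹

theorem summable_massDen_inv (M : Str →. Str) (σ : Str) :
    Summable fun j => ((massDen M σ j : ℝ))⁻¹ :=
  Summable.of_nonneg_of_le (fun j => by positivity) (massDen_inv_le M σ) summable_index_progDen_inv

theorem mass_nonneg (M : Str →. Str) (σ : Str) : 0 ≤ mass M σ :=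
  tsum_nonneg fun j => by positivity

theorem mass_eq_add (M : Str →. Str) (σ : Str) :
    mass M σ = mass M (σ ++ [false]) + mass M (σ ++ [true]) := by
  rw [mass, mass, mass, ← (summable_massDen_inv M _).tsum_add (summable_massDen_inv M _)]
  refine tsum_congr fun j => ?_
  by_cases h : ∃ p τ, encode p = j ∧ τ ∈ M p
  · obtain ⟨p, τ, rfl, hτ⟩ := h
    simp only [massDen_encode hτ, prefixOfPadded_append]
    by_cases hp : PrefixOfPadded σ τ
    · cases hb : τ.getD σ.length false <;> simp [hp]
    · simp [hp]
  · simp [massDen_eq_zero h]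

theorem inv_progDen_le_mass {M : Str →. Str} {p τ : Str} (h : τ ∈ M p) :
    ((progDen p : ℝ))⁻¹ ≤ mass M τ := by
  have h1 := (summable_massDen_inv M τ).le_tsum (encode p) fun j _ => by positivity
  rwa [massDen_encode h, if_pos (PrefixOfPadded.refl τ)] at h1

theorem IsMachine.exists_mass_approx {M : Str →. Str} (hM : IsMachine M) :
    ∃ F : Str → ℕ → ℕ × ℕ, Computable₂ F ∧
      (∀ σ, Monotone fun t => ((F σ t).1 : ℝ) / (F σ t).2) ∧
      ∀ σ, Tendsto (fun t => ((F σ t).1 : ℝ) / (F σ t).2) atTop (𝓝 (mass M σ)) := by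
  obtain ⟨f, hf, hmono, hmem⟩ := hM.exists_approx
  set T : Str × ℕ → ℕ → ℕ := fun x j =>
    ((decode₂ Str j).bind fun p => (f x.2 p).map fun τ =>
      bif decide (PrefixOfPadded x.1 τ) then progDen p else 0).getD 0 with hT
  have hTc : Computable₂ T := by
    have hprog : Computable fun z : (((Str × ℕ) × ℕ) × Str) × Str => z.1.2 :=
      Computable.snd.comp Computable.fst
    have hσ : Computable fun z : (((Str × ℕ) × ℕ) × Str) × Str => z.1.1.1.1 :=
      Computable.fst.comp (Computable.fst.comp (Computable.fst.comp Computable.fst))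
    have hin : Computable fun z : (((Str × ℕ) × ℕ) × Str) × Str =>
        bif decide (PrefixOfPadded z.1.1.1.1 z.2) then progDen z.1.2 else 0 :=
      Computable.cond (primrecRel_prefixOfPadded.decide.to_comp.comp hσ Computable.snd)
        (primrec_progDen.to_comp.comp hprog) (Computable.const 0)
    have hmid : Computable fun z : ((Str × ℕ) × ℕ) × Str => (f z.1.1.2 z.2).map fun τ =>
        bif decide (PrefixOfPadded z.1.1.1 τ) then progDen z.2 else 0 :=
      Computable.option_map (hf.comp
        (Computable.snd.comp (Computable.fst.comp Computable.fst)) Computable.snd) hin.to₂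
    exact Computable.option_getD (Computable.option_bind
      (Primrec.decode₂.to_comp.comp Computable.snd) hmid.to₂) (Computable.const 0)
  have hTprog : ∀ σ t p, T (σ, t) (encode p) =
      if ∃ τ, f t p = some τ ∧ PrefixOfPadded σ τ then progDen p else 0 := by
    intro σ t p
    simp only [hT, encodek₂, Option.bind_some]
    cases hfp : f t p with
    | none => simp
    | some τ => by_cases hp : PrefixOfPadded σ τ <;> simp [hp]
  have hTnone : ∀ j, (¬ ∃ p : Str, encode p = j) → ∀ x, T x j = 0 := by
    intro j hj x
    have : decode₂ Str j = none := by
      rw [Option.eq_none_iff_forall_ne_some]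
      intro p hp
      exact hj ⟨p, decode₂_eq_some.1 hp⟩
    simp [hT, this]
  obtain ⟨F, hF, hFsum⟩ := computable_sum_inv hTc
  have hsum : ∀ σ t, ((F (σ, t) t).1 : ℝ) / (F (σ, t) t).2 =
      ∑ j ∈ Finset.range t, ((T (σ, t) j : ℝ))⁻¹ := by
    intro σ t
    have := congrArg (fun r : ℚ => (r : ℝ)) (hFsum (σ, t) t).2
    push_cast at this
    exact this
  have hTle : ∀ σ t t' j, t ≤ t' → ((T (σ, t) j : ℝ))⁻¹ ≤ ((T (σ, t') j : ℝ))⁻¹ := by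
    intro σ t t' j htt
    by_cases hj : ∃ p : Str, encode p = j
    · obtain ⟨p, rfl⟩ := hj
      rw [hTprog, hTprog]
      by_cases h : ∃ τ, f t p = some τ ∧ PrefixOfPadded σ τ
      · have h' : ∃ τ, f t' p = some τ ∧ PrefixOfPadded σ τ :=
          h.imp fun τ hτ => ⟨hmono p τ t t' htt hτ.1, hτ.2⟩
        rw [if_pos h, if_pos h']
      · rw [if_neg h, Nat.cast_zero, inv_zero]
        positivity
    · simp [hTnone j hj]
  have hTlim : ∀ σ j, ∀ᶠ t in atTop, T (σ, t) j = massDen M σ j := by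
    intro σ j
    by_cases hj : ∃ p : Str, encode p = j
    · obtain ⟨p, rfl⟩ := hj
      by_cases h : ∃ τ, τ ∈ M p
      · obtain ⟨τ, hτ⟩ := h
        obtain ⟨t₀, ht₀⟩ := (hmem p τ).1 hτ
        filter_upwards [eventually_ge_atTop t₀] with t ht
        rw [hTprog, massDen_encode hτ]
        refine if_congr ?_ rfl rfl
        rw [hmono p τ t₀ t ht ht₀]
        simp
      · refine Eventually.of_forall fun t => ?_
        rw [hTprog, massDen_eq_zero, if_neg]
        · rintro ⟨τ, hτ, -⟩
          exact h ⟨τ, (hmem p τ).2 ⟨t, hτ⟩⟩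
        · rintro ⟨p', τ, hp, hτ⟩
          rw [encode_injective hp] at hτ
          exact h ⟨τ, hτ⟩
    · refine Eventually.of_forall fun t => ?_
      rw [hTnone j hj, massDen_eq_zero]
      rintro ⟨p, -, hp, -⟩
      exact hj ⟨p, hp⟩
  refine ⟨fun σ t => F (σ, t) t, hF.comp Computable.id Computable.snd, fun σ t t' htt => ?_,
    fun σ => ?_⟩
  · simp only [hsum]
    exact (Finset.sum_le_sum fun j _ => hTle σ t t' j htt).trans
      (Finset.sum_le_sum_of_subset_of_nonneg (Finset.range_mono htt) fun j _ _ => by positivity)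
  · simp only [hsum]
    have heq : ∀ t, ∑ j ∈ Finset.range t, ((T (σ, t) j : ℝ))⁻¹ =
        ∑' j, if j < t then ((T (σ, t) j : ℝ))⁻¹ else 0 := by
      intro t
      rw [tsum_eq_sum (s := Finset.range t)]
      · exact Finset.sum_congr rfl fun j hj => (if_pos (Finset.mem_range.1 hj)).symm
      · intro j hj
        rw [if_neg (by simpa using hj)]
    simp only [heq]
    refine tendsto_tsum_of_dominated_convergence (summable_massDen_inv M σ) (fun j => ?_)
      (Eventually.of_forall fun t j => ?_)
    · refine tendsto_const_nhds.congr' ?_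
      filter_upwards [hTlim σ j, eventually_gt_atTop j] with t h1 h2
      rw [if_pos h2, h1]
    · split_ifs
      · obtain ⟨t', h1, h2⟩ := ((hTlim σ j).and (eventually_ge_atTop t)).exists
        rw [Real.norm_of_nonneg (by positivity), ← h1]
        exact hTle σ t t' j h2
      · simp

theorem computable_floor_two_rpow {q : ℚ} (hq : 0 ≤ q) :
    Computable₂ fun n t : ℕ => ⌊(2 : ℝ) ^ ((q : ℝ) * n) * 2 ^ t⌋₊ := by
  set a := q.num.toNat with ha
  set b := q.den with hb
  have hb0 : 0 < b := q.den_pos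
  have hpow : ∀ n t : ℕ, ((2 : ℝ) ^ ((q : ℝ) * n) * 2 ^ t) ^ b = 2 ^ (a * n + b * t) := by
    intro n t
    have h1 : ((a : ℕ) : ℝ) = (q.num : ℝ) := by
      have := Int.toNat_of_nonneg (Rat.num_nonneg.2 hq)
      exact_mod_cast congrArg (fun z : ℤ => (z : ℝ)) this
    have h2 : (q : ℝ) * b = a := by
      rw [h1, hb]
      exact_mod_cast Rat.mul_den_eq_num q
    rw [mul_pow, ← Real.rpow_mul_natCast two_pos.le, mul_right_comm, h2, pow_add, ← pow_mul,
      mul_comm t b]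
    congr 1
    exact_mod_cast Real.rpow_natCast 2 (a * n)
  have hP : PrimrecRel fun (x : ℕ × ℕ) (N : ℕ) => N ^ b ≤ 2 ^ (a * x.1 + b * x.2) := by
    refine Primrec.nat_le.comp (primrec_pow.comp Primrec.snd (Primrec.const b))
      (primrec_pow.comp (Primrec.const 2) (Primrec.nat_add.comp ?_ ?_))
    · exact Primrec.nat_mul.comp (Primrec.const a) (Primrec.fst.comp Primrec.fst)
    · exact Primrec.nat_mul.comp (Primrec.const b) (Primrec.snd.comp Primrec.fst)
  have hB : Primrec fun x : ℕ × ℕ => 2 ^ (a * x.1 + b * x.2) :=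
    primrec_pow.comp (Primrec.const 2) (Primrec.nat_add.comp
      (Primrec.nat_mul.comp (Primrec.const a) Primrec.fst)
      (Primrec.nat_mul.comp (Primrec.const b) Primrec.snd))
  refine (Primrec.nat_findGreatest hB hP).to_comp.of_eq fun x => ?_
  obtain ⟨n, t⟩ := x
  have hx : (0 : ℝ) ≤ (2 : ℝ) ^ ((q : ℝ) * n) * 2 ^ t := by positivity
  apply le_antisymm
  · refine Nat.le_floor ?_
    refine le_of_pow_le_pow_left₀ hb0.ne' hx ?_
    rw [hpow]
    have := Nat.findGreatest_spec (P := fun N => N ^ b ≤ 2 ^ (a * n + b * t)) (m := 0)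
      (n := 2 ^ (a * n + b * t)) (Nat.zero_le _) (by simp [hb0.ne'])
    exact_mod_cast this
  · have hfl : ⌊(2 : ℝ) ^ ((q : ℝ) * n) * 2 ^ t⌋₊ ^ b ≤ 2 ^ (a * n + b * t) := by
      have := pow_le_pow_left₀ (Nat.cast_nonneg _) (Nat.floor_le hx) b
      rw [hpow] at this
      exact_mod_cast this
    exact Nat.le_findGreatest ((Nat.le_self_pow hb0.ne' _).trans hfl) hfl

theorem monotone_floor_mul_two_pow_div (x : ℝ) (hx : 0 ≤ x) :
    Monotone fun t : ℕ => (⌊x * 2 ^ t⌋₊ : ℝ) / 2 ^ t := by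
  refine monotone_nat_of_le_succ fun t => ?_
  have h : ((2 * ⌊x * 2 ^ t⌋₊ : ℕ) : ℝ) ≤ ⌊x * 2 ^ (t + 1)⌋₊ := by
    refine Nat.cast_le.2 (Nat.le_floor ?_)
    have := Nat.floor_le (show 0 ≤ x * 2 ^ t by positivity)
    push_cast
    rw [pow_succ]
    linarith
  have h2 : (0 : ℝ) < 2 ^ t := by positivity
  push_cast at h
  rw [div_le_div_iff₀ h2 (by positivity)]
  calc (⌊x * 2 ^ t⌋₊ : ℝ) * 2 ^ (t + 1) = 2 * ⌊x * 2 ^ t⌋₊ * 2 ^ t := by ring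
    _ ≤ _ := mul_le_mul_of_nonneg_right h h2.le

/-- The `q`-gale induced by the machine `M`. -/
noncomputable def machineGale (M : Str →. Str) (q : ℚ) (σ : Str) : ℝ≥0 :=
  ⟨2 ^ ((q : ℝ) * σ.length) * mass M σ, mul_nonneg (by positivity) (mass_nonneg M σ)⟩

theorem coe_machineGale (M : Str →. Str) (q : ℚ) (σ : Str) :
    (machineGale M q σ : ℝ) = 2 ^ ((q : ℝ) * σ.length) * mass M σ := rfl

theorem isGale_machineGale (M : Str →. Str) (q : ℚ) : IsGale q (machineGale M q) := by
  intro σ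
  simp only [coe_machineGale, List.length_append, List.length_singleton]
  rw [mass_eq_add, ← mul_add, ← mul_assoc, ← Real.rpow_add two_pos]
  congr 2
  push_cast
  ring

theorem ceValues_machineGale {M : Str →. Str} (hM : IsMachine M) {q : ℚ} (hq : 0 ≤ q) :
    CEValues (machineGale M q) := by
  obtain ⟨F, hF, hmono, hlim⟩ := hM.exists_mass_approx
  obtain ⟨r, hrc, hr⟩ : ∃ r : Str → ℕ → ℕ, Computable₂ r ∧
      ∀ σ t, r σ t = ⌊(2 : ℝ) ^ ((q : ℝ) * σ.length) * 2 ^ t⌋₊ :=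
    ⟨fun σ t => ⌊(2 : ℝ) ^ ((q : ℝ) * σ.length) * 2 ^ t⌋₊,
      Computable₂.comp (f := fun n t : ℕ => ⌊(2 : ℝ) ^ ((q : ℝ) * n) * 2 ^ t⌋₊)
        (computable_floor_two_rpow hq) (Computable.list_length.comp Computable.fst)
        Computable.snd, fun _ _ => rfl⟩
  have hmul : Computable₂ fun m n : ℕ => m * n := Primrec.nat_mul.to_comp
  have hpow : Computable fun x : Str × ℕ => 2 ^ x.2 :=
    (primrec_pow.comp (Primrec.const 2) Primrec.snd).to_comp
  have hF' : Computable fun x : Str × ℕ => F x.1 x.2 := hF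
  have hnum : Computable fun x : Str × ℕ => r x.1 x.2 * (F x.1 x.2).1 :=
    hmul.comp hrc (Computable.fst.comp hF')
  have hden : Computable fun x : Str × ℕ => 2 ^ x.2 * (F x.1 x.2).2 :=
    hmul.comp hpow (Computable.snd.comp hF')
  have hcast : ∀ σ t, ((((r σ t * (F σ t).1 : ℕ) : ℚ) / (2 ^ t * (F σ t).2 : ℕ) : ℚ) : ℝ) =
      (⌊(2 : ℝ) ^ ((q : ℝ) * σ.length) * 2 ^ t⌋₊ : ℝ) / 2 ^ t *
        (((F σ t).1 : ℝ) / (F σ t).2) := by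
    intro σ t
    rw [← hr]
    push_cast
    rw [div_mul_div_comm]
  refine ⟨_, computable_natDiv_rat.comp (Computable.pair hnum hden), fun σ s t hst => ?_,
    fun σ => ?_⟩
  · refine (Rat.cast_le (K := ℝ)).1 ?_
    dsimp only
    rw [hcast, hcast]
    exact mul_le_mul (monotone_floor_mul_two_pow_div _ (by positivity) hst) (hmono σ hst)
      (by positivity) (by positivity)
  · simp only [hcast, coe_machineGale]
    refine Tendsto.mul ?_ (hlim σ)
    have h := tendsto_nat_floor_mul_div_atTop (R := ℝ)
      (show 0 ≤ (2 : ℝ) ^ ((q : ℝ) * σ.length) by positivity)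
    exact h.comp (tendsto_pow_atTop_atTop_of_one_lt one_lt_two)

theorem exists_program {M : Str →. Str} {τ : Str} (h : Cplx M τ ≠ ⊤) :
    ∃ p, τ ∈ M p ∧ p.length = (Cplx M τ).toNat := by
  have hne : ((fun σ : Str => (σ.length : ℕ∞)) '' {σ | τ ∈ M σ}).Nonempty := by
    by_contra hne
    rw [Set.not_nonempty_iff_eq_empty] at hne
    exact h (by rw [Cplx, hne, sInf_empty])
  obtain ⟨p, hp, hlen⟩ := csInf_mem hne
  exact ⟨p, hp, by rw [Cplx, ← hlen]; rfl⟩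

theorem succeeds_machineGale {M : Str →. Str} (hfin : ∀ σ, Cplx M σ ≠ ⊤) {q : ℚ} {r : ℝ}
    (hr : 0 ≤ r) (hrq : r < q) {A : Seq}
    (hA : ∃ᶠ n : ℕ in atTop, ((Cplx M (pre A n)).toNat : ℝ) / n < r) :
    Succeeds (machineGale M q) A := by
  refine ENNReal.eq_top_of_forall_nnreal_le fun K => ?_
  set b : ℝ := 2 ^ ((q : ℝ) - r) with hb
  have hb1 : 1 < b := Real.one_lt_rpow one_lt_two (by linarith)
  have hlim := tendsto_pow_const_div_const_pow_of_one_lt 2 hb1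
  have hev : ∀ᶠ n : ℕ in atTop, (n : ℝ) ^ 2 / b ^ n < ((K + 1) * (r + 1) ^ 2)⁻¹ :=
    hlim.eventually_lt_const (by positivity)
  refine Filter.le_limsup_of_frequently_le ?_ (by isBoundedDefault)
  refine (hA.and_eventually (hev.and (eventually_ge_atTop 1))).mono ?_
  rintro n ⟨h1, h2, h3⟩
  have hn : (1 : ℝ) ≤ n := by exact_mod_cast h3
  have hn0 : (0 : ℝ) < n := by linarith
  obtain ⟨p, hp, hlen⟩ := exists_program (hfin (pre A n))
  rw [← hlen, div_lt_iff₀ hn0] at h1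
  have hden : (progDen p : ℝ) ≤ 2 ^ (r * n) * ((r + 1) * n) ^ 2 := by
    rw [progDen]
    push_cast
    refine mul_le_mul ?_ ?_ (by positivity) (by positivity)
    · rw [← Real.rpow_natCast]
      exact Real.rpow_le_rpow_of_exponent_le one_le_two h1.le
    · exact pow_le_pow_left₀ (by positivity) (by linarith) 2
  have hbn : b ^ n * 2 ^ (r * n) = 2 ^ ((q : ℝ) * n) := by
    rw [hb, ← Real.rpow_mul_natCast two_pos.le, ← Real.rpow_add two_pos]
    congr 1
    ring
  have hK : (K : ℝ) ≤ machineGale M q (pre A n) := by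
    rw [coe_machineGale, length_pre]
    refine le_trans ?_ (mul_le_mul_of_nonneg_left (inv_progDen_le_mass hp) (by positivity))
    rw [← div_eq_mul_inv, le_div_iff₀ (by exact_mod_cast progDen_pos p)]
    rw [div_lt_iff₀ (by positivity), inv_mul_eq_div, lt_div_iff₀ (by positivity)] at h2
    have h2r : (0 : ℝ) < 2 ^ (r * n) := by positivity
    calc (K : ℝ) * progDen p ≤ (K + 1) * (2 ^ (r * n) * ((r + 1) * n) ^ 2) := by
          refine mul_le_mul (by linarith) hden (by positivity) (by positivity)
      _ = 2 ^ (r * n) * ((n : ℝ) ^ 2 * ((K + 1) * (r + 1) ^ 2)) := by ring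
      _ ≤ 2 ^ (r * n) * b ^ n := by gcongr
      _ = _ := by rw [mul_comm, hbn]
  exact_mod_cast hK

end MachineGale

/-! ### Dimension and complexity ratios -/

section Dimension

open Filter

theorem isBoundedUnder_ge_ratio (f : ℕ → ℕ) :
    IsBoundedUnder (· ≥ ·) atTop fun n : ℕ => (f n : ℝ) / n :=
  isBoundedUnder_of ⟨0, fun n => by positivity⟩

theorem isCoboundedUnder_ge_ratio {f : ℕ → ℕ} {c : ℕ} (hf : ∀ n, f n ≤ 2 * n + c) :
    IsCoboundedUnder (· ≥ ·) atTop fun n : ℕ => (f n : ℝ) / n := by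
  refine IsBoundedUnder.isCoboundedUnder_ge ⟨2 + c, eventually_map.2 ?_⟩
  filter_upwards [eventually_ge_atTop 1] with n hn
  have hn' : (1 : ℝ) ≤ n := by exact_mod_cast hn
  have h : (f n : ℝ) ≤ 2 * n + c := by exact_mod_cast hf n
  rw [div_le_iff₀ (by linarith)]
  nlinarith [(Nat.cast_nonneg c : (0 : ℝ) ≤ c)]

theorem liminf_ratio_nonneg {f : ℕ → ℕ} {c : ℕ} (hf : ∀ n, f n ≤ 2 * n + c) :
    0 ≤ liminf (fun n : ℕ => (f n : ℝ) / n) atTop :=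
  le_liminf_of_le (isCoboundedUnder_ge_ratio hf) (Eventually.of_forall fun n => by positivity)

theorem liminf_ratio_le_of_le_add {f g : ℕ → ℕ} {b c : ℕ} (hg : ∀ n, g n ≤ 2 * n + b)
    (hfg : ∀ n, f n ≤ g n + c) :
    liminf (fun n : ℕ => (f n : ℝ) / n) atTop ≤ liminf (fun n : ℕ => (g n : ℝ) / n) atTop := by
  refine le_of_forall_gt_imp_ge_of_dense fun x hx => ?_
  obtain ⟨y, hy, hyx⟩ := exists_between hx
  have hlim : Tendsto (fun n : ℕ => (c : ℝ) / n) atTop (nhds 0) :=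
    tendsto_const_div_atTop_nhds_zero_nat _
  refine liminf_le_of_frequently_le ?_ (isBoundedUnder_ge_ratio f)
  refine ((frequently_lt_of_liminf_lt (isCoboundedUnder_ge_ratio hg) hy).and_eventually
    (hlim.eventually_lt_const (sub_pos.2 hyx))).mono ?_
  rintro n ⟨h1, h2⟩
  calc (f n : ℝ) / n ≤ (g n + c) / n := by
        have : (f n : ℝ) ≤ g n + c := by exact_mod_cast hfg n
        gcongr
    _ = g n / n + c / n := add_div _ _ _
    _ ≤ x := by linarith

/-- Every rational above `liminf C_M(A↾n)/n` admits a c.e. gale succeeding on `A`. -/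
theorem exists_gale_of_liminf_lt {M : Str →. Str} (hM : IsMachine M) {c : ℕ}
    (hc : ∀ σ, Cplx M σ ≤ ((2 * σ.length + c : ℕ) : ℕ∞)) {A : Seq} {q : ℚ}
    (hq : liminf (fun n : ℕ => ((Cplx M (pre A n)).toNat : ℝ) / n) atTop < q) :
    0 ≤ q ∧ ∃ d : Str → ℝ≥0, IsGale (q : ℝ) d ∧ CEValues d ∧ Succeeds d A := by
  have hfin : ∀ σ, Cplx M σ ≠ ⊤ := fun σ => ne_top_of_le_ne_top (ENat.natCast_ne_top _) (hc σ)
  have hb : ∀ n, (Cplx M (pre A n)).toNat ≤ 2 * n + c := fun n => by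
    simpa [length_pre] using ENat.toNat_le_of_le_natCast (hc (pre A n))
  obtain ⟨r, hr, hrq⟩ := exists_between hq
  have hr0 : 0 ≤ r := (liminf_ratio_nonneg hb).trans hr.le
  have hq0 : 0 ≤ q := by exact_mod_cast hr0.trans hrq.le
  exact ⟨hq0, machineGale M q, isGale_machineGale M q, ceValues_machineGale hM hq0,
    succeeds_machineGale hfin hr0 hrq
      (frequently_lt_of_liminf_lt (isCoboundedUnder_ge_ratio hb) hr)⟩

end Dimension

/-- **Mayordomo's theorem**: for every `A ∈ 2^ω`,
`dim(A) = liminf_n K(A↾n)/n = liminf_n C(A↾n)/n`. -/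
theorem mayordomo (UK : Str →. Str) (hUK : UniversalPFMachine UK)
    (UC : Str →. Str) (hUC : UniversalMachine UC) (A : Seq) :
    effDim A =
        Filter.liminf (fun n : ℕ => ((Cplx UK (pre A n)).toNat : ℝ) / n) Filter.atTop ∧
      effDim A =
        Filter.liminf (fun n : ℕ => ((Cplx UC (pre A n)).toNat : ℝ) / n) Filter.atTop := by
  obtain ⟨b, hb⟩ := Cplx_le_two_mul_length hUK
  obtain ⟨c, hc⟩ := hUC.2 UK hUK.1.1
  have hbC : ∀ σ, Cplx UC σ ≤ ((2 * σ.length + (b + c) : ℕ) : ℕ∞) := fun σ =>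
    (hc σ).trans ((add_le_add_left (hb σ) _).trans (by push_cast; rw [add_assoc]))
  have hbK : ∀ n, (Cplx UK (pre A n)).toNat ≤ 2 * n + b := fun n => by
    simpa [length_pre] using ENat.toNat_le_of_le_natCast (hb (pre A n))
  have hCK := liminf_ratio_le_of_le_add (f := fun n => (Cplx UC (pre A n)).toNat) (c := c) hbK
    fun n => by
      have hfin : Cplx UK (pre A n) ≠ ⊤ := ne_top_of_le_ne_top (ENat.natCast_ne_top _) (hb _)
      refine ENat.toNat_le_of_le_natCast ((hc _).trans_eq ?_)
      rw [Nat.cast_add, ENat.natCast_toNat hfin]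
  have hC : effDim A ≤
      Filter.liminf (fun n : ℕ => ((Cplx UC (pre A n)).toNat : ℝ) / n) Filter.atTop := by
    refine le_of_forall_gt_imp_ge_of_dense fun x hx => ?_
    obtain ⟨q, hq, hqx⟩ := exists_rat_btwn hx
    obtain ⟨hq0, hgale⟩ := exists_gale_of_liminf_lt hUC.1 hbC hq
    refine le_trans (csInf_le (a := (q : ℝ)) ⟨0, ?_⟩ ⟨q, hq0, rfl, hgale⟩) hqx.le
    rintro _ ⟨p, hp, rfl, -⟩
    exact_mod_cast hp
  have hK : Filter.liminf (fun n : ℕ => ((Cplx UK (pre A n)).toNat : ℝ) / n) Filter.atTop ≤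
      effDim A := by
    refine le_csInf ?_ ?_
    · obtain ⟨q, hq⟩ := exists_rat_gt
        (Filter.liminf (fun n : ℕ => ((Cplx UC (pre A n)).toNat : ℝ) / n) Filter.atTop)
      obtain ⟨hq0, hgale⟩ := exists_gale_of_liminf_lt hUC.1 hbC hq
      exact ⟨q, q, hq0, rfl, hgale⟩
    · rintro _ ⟨q, hq0, rfl, d, hd, hce, hA⟩
      exact le_of_forall_pos_le_add fun ε hε => Filter.liminf_le_of_frequently_le
        (frequently_Cplx_div_le hUK hq0 hd hce hA hε) (isBoundedUnder_ge_ratio _)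
  exact ⟨(hC.trans hCK).antisymm hK, hC.antisymm (hCK.trans hK)⟩

end AR
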